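/- For all x, y ∈ ℝ³ with x ≠ y and all indices i, j ∈ {1,2,3}, the following two series converge absolutely and the Kupradze matrix satisfies Γ^ω(x,y)_{ij} = (1/(4π)) Σ_{l=0}^∞ (i^l/(l!(l+2))) (1/ω²) ((l+1)κ_s^{l+2} + κ_p^{l+2}) |x−y|^{l−1} δ_{ij} − (1/(4π)) Σ_{l=0}^∞ (i^l/(l!(l+2))) ((l−1)/ω²) (κ_s^{l+2} − κ_p^{l+2}) |x−y|^{l−3} (x_i−y_i)(x_j−y_j), where i in i^l denotes the imaginary unit and δ_{ij} the Kronecker delta. -/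

import Mathlib

noncomputable section
open Real

abbrev E3 := EuclideanSpace ℝ (Fin 3)

/-- Free-space fundamental solution of the Helmholtz equation,
`Φ_κ(x,y) = exp(iκ|x−y|)/(4π|x−y|)`. -/
def Phi (κ : ℝ) (x y : E3) : ℂ :=
  Complex.exp (Complex.I * κ * ‖x - y‖) / (4 * Real.pi * ‖x - y‖)

/-- Transversal wavenumber `κ_s = ω/c_s = ω/√μ`. -/
def kappaS (mu om : ℝ) : ℝ := om / Real.sqrt mu

/-- Longitudinal wavenumber `κ_p = ω/c_p = ω/√(λ+2μ)`. -/
def kappaP (lam mu om : ℝ) : ℝ := om / Real.sqrt (lam + 2 * mu)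

/-- The Kupradze matrix of the fundamental solution of the Navier equation,
entrywise: `Γ^ω(x,y)_{ij} = (1/μ)Φ_{κ_s}δ_{ij} + (1/ω²)∂²_{x_i x_j}(Φ_{κ_s}−Φ_{κ_p})`. -/
def Gamma (lam mu om : ℝ) (x y : E3) (i j : Fin 3) : ℂ :=
  (1 / (mu : ℂ)) * Phi (kappaS mu om) x y * (if i = j then 1 else 0)
  + (1 / (om : ℂ) ^ 2) *
      fderiv ℝ
        (fun x' : E3 =>
          fderiv ℝ
            (fun x'' : E3 => Phi (kappaS mu om) x'' y - Phi (kappaP lam mu om) x'' y)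
            x' (EuclideanSpace.single j 1))
        x (EuclideanSpace.single i 1)

/-- `l`-th term of the first series in the expansion (kupradzeten1):
`(1/(4π)) (i^l/(l!(l+2))) (1/ω²) ((l+1)κ_s^{l+2} + κ_p^{l+2}) |x−y|^{l−1} δ_{ij}`. -/
def gammaSeries1 (lam mu om : ℝ) (x y : E3) (i j : Fin 3) (l : ℕ) : ℂ :=
  (1 / (4 * (Real.pi : ℂ))) * (Complex.I ^ l / ((l.factorial : ℂ) * ((l : ℂ) + 2)))
    * (1 / (om : ℂ) ^ 2)
    * (((l : ℂ) + 1) * ((kappaS mu om : ℝ) : ℂ) ^ (l + 2)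
        + ((kappaP lam mu om : ℝ) : ℂ) ^ (l + 2))
    * ((‖x - y‖ ^ ((l : ℤ) - 1) : ℝ) : ℂ)
    * (if i = j then 1 else 0)

/-- `l`-th term of the second series in the expansion (kupradzeten1):
`(1/(4π)) (i^l/(l!(l+2))) ((l−1)/ω²) (κ_s^{l+2} − κ_p^{l+2}) |x−y|^{l−3} (x_i−y_i)(x_j−y_j)`. -/
def gammaSeries2 (lam mu om : ℝ) (x y : E3) (i j : Fin 3) (l : ℕ) : ℂ :=
  (1 / (4 * (Real.pi : ℂ))) * (Complex.I ^ l / ((l.factorial : ℂ) * ((l : ℂ) + 2)))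
    * (((l : ℂ) - 1) / (om : ℂ) ^ 2)
    * (((kappaS mu om : ℝ) : ℂ) ^ (l + 2) - ((kappaP lam mu om : ℝ) : ℂ) ^ (l + 2))
    * ((‖x - y‖ ^ ((l : ℤ) - 3) : ℝ) : ℂ)
    * ((x i - y i : ℝ) : ℂ) * ((x j - y j : ℝ) : ℂ)

/-!
With `r = |x - y|`, a radial function satisfies
`∂ᵢ∂ⱼ f(r) = δᵢⱼ (D f)(r) + (xᵢ - yᵢ)(xⱼ - yⱼ) (D² f)(r)`, where `D = r⁻¹ d/dr`. For
`f(r) = exp(iκr) / (4πr)` the leading singularities of `D f` and `D² f` at `r = 0` are `-1/(4πr³)`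
and `3/(4πr⁵)`, which do not depend on `κ` and hence cancel in the difference of two wave numbers.
What remains is given by the exponential series and the power series of
`z ↦ exp z * (z - 1) + 1` at `z = iκr`, because the radial Helmholtz equation
`r² D² f + 3 D f + κ² f = 0` in `ℝ³` expresses `D² f` through `f` and `D f`.
-/

open Complex Filter Topology

section Radial

variable {E F : Type*} [NormedAddCommGroup E] [InnerProductSpace ℝ E]
  [NormedAddCommGroup F] [NormedSpace ℝ F] {x y : E}

lemma hasFDerivAt_norm_sub (hxy : x ≠ y) :
    HasFDerivAt (fun x' : E ↦ ‖x' - y‖) (‖x - y‖⁻¹ • innerSL ℝ (x - y)) x := by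
  have hr : ‖x - y‖ ≠ 0 := (norm_sub_pos_iff.mpr hxy).ne'
  have hsqrt := ((hasFDerivAt_id x).sub_const y).norm_sq.sqrt (pow_ne_zero 2 hr)
  simp only [id, Real.sqrt_sq (norm_nonneg _)] at hsqrt
  refine hsqrt.congr_fderiv ?_
  ext u
  simp only [ContinuousLinearMap.comp_id, nsmul_eq_mul, _root_.smul_apply, innerSL_apply_apply,
    smul_eq_mul, Nat.cast_ofNat]
  field_simp

lemma hasFDerivAt_radial {f : ℝ → F} {f' : F} (hxy : x ≠ y)
    (hf : HasDerivAt f (‖x - y‖ • f') ‖x - y‖) :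
    HasFDerivAt (fun x' ↦ f ‖x' - y‖) ((innerSL ℝ (x - y)).smulRight f') x := by
  have hr : ‖x - y‖ ≠ 0 := (norm_sub_pos_iff.mpr hxy).ne'
  refine (hf.hasFDerivAt.comp x (hasFDerivAt_norm_sub hxy)).congr_fderiv ?_
  ext u
  simp only [ContinuousLinearMap.comp_apply, ContinuousLinearMap.toSpanSingleton_apply,
    ContinuousLinearMap.smulRight_apply, _root_.smul_apply, innerSL_apply_apply, smul_smul,
    smul_eq_mul]
  field_simp

lemma fderiv_fderiv_radial {f f₁ : ℝ → F} {f₂ : F} (hxy : x ≠ y)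
    (hf : ∀ᶠ r in 𝓝 ‖x - y‖, HasDerivAt f (r • f₁ r) r)
    (hf₁ : HasDerivAt f₁ (‖x - y‖ • f₂) ‖x - y‖) (u v : E) :
    fderiv ℝ (fun x' ↦ fderiv ℝ (fun x'' ↦ f ‖x'' - y‖) x' v) x u =
      inner ℝ u v • f₁ ‖x - y‖ + (inner ℝ (x - y) u * inner ℝ (x - y) v) • f₂ := by
  have hfirst : (fun x' ↦ fderiv ℝ (fun x'' ↦ f ‖x'' - y‖) x' v) =ᶠ[𝓝 x]
      fun x' ↦ inner ℝ (x' - y) v • f₁ ‖x' - y‖ := by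
    have hcont : Tendsto (fun x' ↦ ‖x' - y‖) (𝓝 x) (𝓝 ‖x - y‖) :=
      (hasFDerivAt_norm_sub hxy).continuousAt
    filter_upwards [hcont.eventually hf, isOpen_ne.mem_nhds hxy] with x' hx' hne
    rw [(hasFDerivAt_radial hne hx').fderiv, ContinuousLinearMap.smulRight_apply,
      innerSL_apply_apply]
  have hinner : HasFDerivAt (fun x' ↦ inner ℝ (x' - y) v) ((innerSL ℝ).flip v) x :=
    ((innerSL ℝ).flip v).hasFDerivAt.comp x ((hasFDerivAt_id x).sub_const y)
  rw [hfirst.fderiv_eq, (hinner.fun_smul (hasFDerivAt_radial hxy hf₁)).fderiv]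
  simp only [_root_.add_apply, _root_.smul_apply, ContinuousLinearMap.smulRight_apply,
    ContinuousLinearMap.flip_apply, innerSL_apply_apply, smul_smul]
  rw [add_comm, mul_comm]

end Radial

section SphericalWave

/-- The outgoing spherical wave `exp(iκr)/(4πr)`, the radial profile of `Phi`, for a complex wave
number `κ`. -/
def sphericalWave (κ : ℂ) (r : ℝ) : ℂ :=
  cexp (I * κ * r) / (4 * π * r)

/-- The operator `r⁻¹ d/dr` applied to `sphericalWave κ`. -/
def sphericalWave₁ (κ : ℂ) (r : ℝ) : ℂ :=
  cexp (I * κ * r) * (I * κ * r - 1) / (4 * π * r ^ 3)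

/-- The operator `r⁻¹ d/dr` applied twice to `sphericalWave κ`, written by means of the radial
Helmholtz equation. -/
def sphericalWave₂ (κ : ℂ) (r : ℝ) : ℂ :=
  -(κ ^ 2 * sphericalWave κ r + 3 * sphericalWave₁ κ r) / r ^ 2

variable (κ : ℂ) {r : ℝ}

lemma hasDerivAt_exp_I_mul_mul_ofReal :
    HasDerivAt (fun r : ℝ ↦ cexp (I * κ * r)) (cexp (I * κ * r) * (I * κ)) r := by
  simpa using ((hasDerivAt_id r).ofReal_comp.const_mul (I * κ)).cexp

lemma hasDerivAt_sphericalWave (hr : r ≠ 0) :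
    HasDerivAt (sphericalWave κ) (r • sphericalWave₁ κ r) r := by
  have hr' : (r : ℂ) ≠ 0 := ofReal_ne_zero.mpr hr
  have hπ : (π : ℂ) ≠ 0 := ofReal_ne_zero.mpr Real.pi_ne_zero
  have hid : HasDerivAt (fun r : ℝ ↦ (r : ℂ)) 1 r := (hasDerivAt_id r).ofReal_comp
  refine ((hasDerivAt_exp_I_mul_mul_ofReal κ).fun_div (hid.const_mul (4 * (π : ℂ)))
    (by simp [hr, Real.pi_ne_zero])).congr_deriv ?_
  rw [sphericalWave₁, real_smul]
  field_simp

lemma hasDerivAt_sphericalWave₁ (hr : r ≠ 0) :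
    HasDerivAt (sphericalWave₁ κ) (r • sphericalWave₂ κ r) r := by
  have hr' : (r : ℂ) ≠ 0 := ofReal_ne_zero.mpr hr
  have hπ : (π : ℂ) ≠ 0 := ofReal_ne_zero.mpr Real.pi_ne_zero
  have hid : HasDerivAt (fun r : ℝ ↦ (r : ℂ)) 1 r := (hasDerivAt_id r).ofReal_comp
  refine (((hasDerivAt_exp_I_mul_mul_ofReal κ).fun_mul
    ((hid.const_mul (I * κ)).sub_const 1)).fun_div ((hid.fun_pow 3).const_mul (4 * (π : ℂ)))
    (by simp [hr, Real.pi_ne_zero])).congr_deriv ?_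
  rw [sphericalWave₂, sphericalWave₁, sphericalWave, real_smul]
  field_simp
  linear_combination κ ^ 2 * (r : ℂ) ^ 4 * I_sq

end SphericalWave

section PowerSeries

lemma hasSum_pow_div_factorial (z : ℂ) : HasSum (fun l : ℕ ↦ z ^ l / l.factorial) (cexp z) := by
  rw [exp_eq_exp_ℂ]
  exact NormedSpace.expSeries_div_hasSum_exp z

lemma hasSum_pow_add_two_div_factorial_mul (z : ℂ) :
    HasSum (fun l : ℕ ↦ z ^ (l + 2) / (l.factorial * (l + 2))) (cexp z * (z - 1) + 1) := by
  -- `1 / (l! (l + 2)) = 1 / (l + 1)! - 1 / (l + 2)!`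
  have h₁ := ((hasSum_nat_add_iff' 1).mpr (hasSum_pow_div_factorial z)).mul_left z
  have h₂ := (hasSum_nat_add_iff' 2).mpr (hasSum_pow_div_factorial z)
  convert! h₁.sub h₂ using 1
  · funext l
    have hfac : (l.factorial : ℂ) ≠ 0 := mod_cast l.factorial_ne_zero
    have hl₁ : (l : ℂ) + 1 ≠ 0 := mod_cast l.succ_ne_zero
    have hl₂ : (l : ℂ) + 2 ≠ 0 := mod_cast (l + 1).succ_ne_zero
    have hfac₁ : ((l + 1).factorial : ℂ) = (l + 1) * l.factorial := mod_cast l.factorial_succ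
    have hfac₂ : ((l + 2).factorial : ℂ) = (l + 2) * ((l + 1) * l.factorial) := mod_cast rfl
    rw [hfac₁, hfac₂]
    field_simp
    ring
  · simp only [Finset.sum_range_succ, Finset.sum_range_zero, Nat.factorial]
    norm_num
    ring

/-- The coefficient `(1/(4π)) i^l/(l!(l+2))` shared by the two series for the Kupradze matrix. -/
def kupradzeCoeff (l : ℕ) : ℂ :=
  1 / (4 * π) * (I ^ l / (l.factorial * (l + 2)))

variable (κ : ℂ) {r : ℝ}

lemma hasSum_add_two_mul_kupradzeCoeff (hr : r ≠ 0) :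
    HasSum (fun l : ℕ ↦ (l + 2) * (kupradzeCoeff l * κ ^ (l + 2) * (r : ℂ) ^ ((l : ℤ) - 1)))
      (κ ^ 2 * sphericalWave κ r) := by
  have hr' : (r : ℂ) ≠ 0 := ofReal_ne_zero.mpr hr
  convert! (hasSum_pow_div_factorial (I * κ * r)).mul_left (κ ^ 2 / (4 * π * r)) using 1
  · funext l
    have hl₂ : (l : ℂ) + 2 ≠ 0 := mod_cast (l + 1).succ_ne_zero
    rw [kupradzeCoeff, zpow_sub_one₀ hr', zpow_natCast]
    field_simp
    ring
  · rw [sphericalWave]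
    ring

lemma hasSum_kupradzeCoeff (hr : r ≠ 0) :
    HasSum (fun l : ℕ ↦ kupradzeCoeff l * κ ^ (l + 2) * (r : ℂ) ^ ((l : ℤ) - 1))
      (-sphericalWave₁ κ r - 1 / (4 * π * r ^ 3)) := by
  have hr' : (r : ℂ) ≠ 0 := ofReal_ne_zero.mpr hr
  convert! (hasSum_pow_add_two_div_factorial_mul (I * κ * r)).mul_left
    (-1 / (4 * π * r ^ 3) : ℂ) using 1
  · funext l
    rw [kupradzeCoeff, zpow_sub_one₀ hr', zpow_natCast, mul_pow, mul_pow, pow_add I, I_sq]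
    field_simp
    ring
  · rw [sphericalWave₁]
    ring

lemma hasSum_sub_one_mul_kupradzeCoeff (hr : r ≠ 0) :
    HasSum (fun l : ℕ ↦ (l - 1) * (kupradzeCoeff l * κ ^ (l + 2) * (r : ℂ) ^ ((l : ℤ) - 3)))
      (-sphericalWave₂ κ r + 3 / (4 * π * r ^ 5)) := by
  have hr' : (r : ℂ) ≠ 0 := ofReal_ne_zero.mpr hr
  convert! ((hasSum_add_two_mul_kupradzeCoeff κ hr).sub
    ((hasSum_kupradzeCoeff κ hr).mul_left 3)).div_const ((r : ℂ) ^ 2) using 1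
  · funext l
    rw [show (l : ℤ) - 3 = (l - 1) - 2 by ring, zpow_sub₀ hr' _ 2, zpow_ofNat]
    ring
  · rw [sphericalWave₂]
    field_simp
    ring

end PowerSeries

section Kupradze

variable {E : Type*} [NormedAddCommGroup E] [InnerProductSpace ℝ E]

/-- The bilinear form of the Kupradze matrix multiplied by `ω²`, on an arbitrary real inner product
space and for arbitrary complex wave numbers `κs` and `κp`. -/
def kupradzeForm (κs κp : ℂ) (x y u v : E) : ℂ :=
  κs ^ 2 * sphericalWave κs ‖x - y‖ * (inner ℝ u v : ℝ) +
    fderiv ℝ (fun x' ↦ fderiv ℝ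
      (fun x'' ↦ sphericalWave κs ‖x'' - y‖ - sphericalWave κp ‖x'' - y‖) x' v) x u

/-- The `l`-th term of the part of `kupradzeForm` proportional to the inner product; it corresponds
to `gammaSeries1`. -/
def kupradzeIsotropicTerm (κs κp : ℂ) (x y u v : E) (l : ℕ) : ℂ :=
  kupradzeCoeff l * ((l + 1) * κs ^ (l + 2) + κp ^ (l + 2)) * (‖x - y‖ : ℂ) ^ ((l : ℤ) - 1) *
    (inner ℝ u v : ℝ)

/-- The `l`-th term of the part of `kupradzeForm` proportional to `(x - y) ⊗ (x - y)`, with the sign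
reversed; it corresponds to `gammaSeries2`. -/
def kupradzeDyadicTerm (κs κp : ℂ) (x y u v : E) (l : ℕ) : ℂ :=
  kupradzeCoeff l * (l - 1) * (κs ^ (l + 2) - κp ^ (l + 2)) * (‖x - y‖ : ℂ) ^ ((l : ℤ) - 3) *
    (inner ℝ (x - y) u : ℝ) * (inner ℝ (x - y) v : ℝ)

variable (κs κp : ℂ) {x y : E}

lemma kupradzeForm_eq (hxy : x ≠ y) (u v : E) :
    kupradzeForm κs κp x y u v =
      (κs ^ 2 * sphericalWave κs ‖x - y‖ +
        (sphericalWave₁ κs ‖x - y‖ - sphericalWave₁ κp ‖x - y‖)) * (inner ℝ u v : ℝ) +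
      (sphericalWave₂ κs ‖x - y‖ - sphericalWave₂ κp ‖x - y‖) *
        (inner ℝ (x - y) u : ℝ) * (inner ℝ (x - y) v : ℝ) := by
  have hr : ‖x - y‖ ≠ 0 := (norm_sub_pos_iff.mpr hxy).ne'
  have hwave : ∀ᶠ r in 𝓝 ‖x - y‖, HasDerivAt (fun r ↦ sphericalWave κs r - sphericalWave κp r)
      (r • (sphericalWave₁ κs r - sphericalWave₁ κp r)) r := by
    filter_upwards [isOpen_ne.mem_nhds hr] with r hr
    rw [smul_sub]
    exact (hasDerivAt_sphericalWave κs hr).fun_sub (hasDerivAt_sphericalWave κp hr)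
  have hwave₁ : HasDerivAt (fun r ↦ sphericalWave₁ κs r - sphericalWave₁ κp r)
      (‖x - y‖ • (sphericalWave₂ κs ‖x - y‖ - sphericalWave₂ κp ‖x - y‖)) ‖x - y‖ := by
    rw [smul_sub]
    exact (hasDerivAt_sphericalWave₁ κs hr).fun_sub (hasDerivAt_sphericalWave₁ κp hr)
  rw [kupradzeForm, fderiv_fderiv_radial hxy hwave hwave₁, real_smul, real_smul, ofReal_mul]
  ring

lemma hasSum_kupradzeIsotropicTerm (hxy : x ≠ y) (u v : E) :
    HasSum (kupradzeIsotropicTerm κs κp x y u v)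
      ((κs ^ 2 * sphericalWave κs ‖x - y‖ +
        (sphericalWave₁ κs ‖x - y‖ - sphericalWave₁ κp ‖x - y‖)) * (inner ℝ u v : ℝ)) := by
  have hr : ‖x - y‖ ≠ 0 := (norm_sub_pos_iff.mpr hxy).ne'
  convert! (((hasSum_add_two_mul_kupradzeCoeff κs hr).sub (hasSum_kupradzeCoeff κs hr)).add
    (hasSum_kupradzeCoeff κp hr)).mul_right ((inner ℝ u v : ℝ) : ℂ) using 1
  · funext l
    rw [kupradzeIsotropicTerm]
    ring
  · ring

lemma hasSum_kupradzeDyadicTerm (hxy : x ≠ y) (u v : E) :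
    HasSum (kupradzeDyadicTerm κs κp x y u v)
      (-((sphericalWave₂ κs ‖x - y‖ - sphericalWave₂ κp ‖x - y‖) *
        (inner ℝ (x - y) u : ℝ) * (inner ℝ (x - y) v : ℝ))) := by
  have hr : ‖x - y‖ ≠ 0 := (norm_sub_pos_iff.mpr hxy).ne'
  convert! (((hasSum_sub_one_mul_kupradzeCoeff κs hr).sub
    (hasSum_sub_one_mul_kupradzeCoeff κp hr)).mul_right
      ((inner ℝ (x - y) u : ℝ) : ℂ)).mul_right ((inner ℝ (x - y) v : ℝ) : ℂ) using 1
  · funext l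
    rw [kupradzeDyadicTerm]
    ring
  · ring

theorem gamma_series_representation_general (hxy : x ≠ y) (u v : E) :
    Summable (fun l ↦ ‖kupradzeIsotropicTerm κs κp x y u v l‖) ∧
    Summable (fun l ↦ ‖kupradzeDyadicTerm κs κp x y u v l‖) ∧
    kupradzeForm κs κp x y u v =
      (∑' l, kupradzeIsotropicTerm κs κp x y u v l) -
        ∑' l, kupradzeDyadicTerm κs κp x y u v l := by
  have hiso := hasSum_kupradzeIsotropicTerm κs κp hxy u v
  have hdyad := hasSum_kupradzeDyadicTerm κs κp hxy u v
  refine ⟨hiso.summable.norm, hdyad.summable.norm, ?_⟩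
  rw [hiso.tsum_eq, hdyad.tsum_eq, kupradzeForm_eq κs κp hxy u v, sub_neg_eq_add]

end Kupradze

section Coordinates

variable (lam : ℝ) {mu om : ℝ} (x y : E3) (i j : Fin 3)

lemma kappaS_sq_div_sq (hmu : 0 ≤ mu) (hom : om ≠ 0) : kappaS mu om ^ 2 / om ^ 2 = 1 / mu := by
  rw [kappaS, div_pow, Real.sq_sqrt hmu, div_div_cancel_left' (pow_ne_zero 2 hom), one_div]

lemma Gamma_eq_kupradzeForm (hmu : 0 ≤ mu) (hom : om ≠ 0) :
    Gamma lam mu om x y i j =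
      1 / (om : ℂ) ^ 2 * kupradzeForm (kappaS mu om) (kappaP lam mu om) x y
        (EuclideanSpace.single i 1) (EuclideanSpace.single j 1) := by
  have hcoeff : 1 / (mu : ℂ) = (kappaS mu om : ℂ) ^ 2 / (om : ℂ) ^ 2 :=
    mod_cast (kappaS_sq_div_sq hmu hom).symm
  have hPhi (κ : ℝ) (x : E3) : Phi κ x y = sphericalWave κ ‖x - y‖ := rfl
  simp only [_root_.Gamma, kupradzeForm, hPhi, hcoeff,
    orthonormal_iff_ite.mp EuclideanSpace.orthonormal_single i j, apply_ite ofReal, ofReal_one,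
    ofReal_zero]
  ring

lemma gammaSeries1_eq_kupradzeIsotropicTerm (l : ℕ) :
    gammaSeries1 lam mu om x y i j l =
      1 / (om : ℂ) ^ 2 * kupradzeIsotropicTerm (kappaS mu om) (kappaP lam mu om) x y
        (EuclideanSpace.single i 1) (EuclideanSpace.single j 1) l := by
  simp only [gammaSeries1, kupradzeIsotropicTerm, kupradzeCoeff,
    orthonormal_iff_ite.mp EuclideanSpace.orthonormal_single i j, apply_ite ofReal, ofReal_one,
    ofReal_zero, ofReal_zpow]
  ring

lemma gammaSeries2_eq_kupradzeDyadicTerm (l : ℕ) :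
    gammaSeries2 lam mu om x y i j l =
      1 / (om : ℂ) ^ 2 * kupradzeDyadicTerm (kappaS mu om) (kappaP lam mu om) x y
        (EuclideanSpace.single i 1) (EuclideanSpace.single j 1) l := by
  have hinner (k : Fin 3) : inner ℝ (x - y) (EuclideanSpace.single k (1 : ℝ)) = x k - y k := by
    simp [EuclideanSpace.inner_single_right]
  simp only [gammaSeries2, kupradzeDyadicTerm, kupradzeCoeff, hinner, ofReal_zpow]
  ring

end Coordinates

/-- Series representation (kupradzeten1) of the Kupradze matrix: both series
converge absolutely and
`Γ^ω(x,y)_{ij} = Σ_l gammaSeries1 − Σ_l gammaSeries2`. -/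
theorem gamma_series_representation (lam mu om : ℝ) (hmu : 0 < mu)
    (hlm : 0 < 3 * lam + 2 * mu) (hom : 0 < om)
    (x y : E3) (hxy : x ≠ y) (i j : Fin 3) :
    Summable (fun l : ℕ => ‖gammaSeries1 lam mu om x y i j l‖) ∧
    Summable (fun l : ℕ => ‖gammaSeries2 lam mu om x y i j l‖) ∧
    Gamma lam mu om x y i j
      = (∑' l : ℕ, gammaSeries1 lam mu om x y i j l)
        - (∑' l : ℕ, gammaSeries2 lam mu om x y i j l) := by
  obtain ⟨hiso, hdyad, hform⟩ := gamma_series_representation_general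
    (kappaS mu om) (kappaP lam mu om) hxy (EuclideanSpace.single i 1) (EuclideanSpace.single j 1)
  simp only [Gamma_eq_kupradzeForm lam x y i j hmu.le hom.ne',
    gammaSeries1_eq_kupradzeIsotropicTerm, gammaSeries2_eq_kupradzeDyadicTerm, norm_mul,
    tsum_mul_left, ← mul_sub, hform]
  exact ⟨hiso.mul_left _, hdyad.mul_left _, trivial⟩

end
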